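/- Let σ be a signature and 𝐃 a σ-structure. Define the partition (P,Q) of 𝐃 as follows: P places two elements d₁, d₂ of D in the same class if Hom(𝐓,t;𝐃,d₁) = Hom(𝐓,t;𝐃,d₂) for every rooted ftree (𝐓,t); Q places two constraints R₁(𝐝₁), R₂(𝐝₂) of 𝒞_𝐃 in the same class if R₁ = R₂, for all s, s' ∈ [arity(R₁)] one has 𝐝₁[s] = 𝐝₁[s'] iff 𝐝₂[s] = 𝐝₂[s'], and for every s ∈ [arity(R₁)] the elements 𝐝₁[s] and 𝐝₂[s] lie in the same P-class. Then (P,Q) is an equitable partition of 𝐃. -/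

import Mathlib

attribute [local instance] Classical.propDecidable

set_option maxHeartbeats 1000000

noncomputable section

/-- A relational structure over the signature given by symbols `σ` with arities `ar`,
with universe `A`: for each relation symbol, a set of tuples. -/
structure Struct (σ : Type) (ar : σ → ℕ) (A : Type) : Type where
  rel : ∀ R : σ, Set (Fin (ar R) → A)

variable {σ : Type} {ar : σ → ℕ}

/-- The set of constraints of a structure: pairs `(R, 𝐚)` with `𝐚 ∈ R(AA)`. -/
def Cons {A : Type} (AA : Struct σ ar A) : Type :=
  Σ R : σ, {u : Fin (ar R) → A // u ∈ AA.rel R}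

instance Cons.finite {A : Type} [Finite σ] [Finite A] {AA : Struct σ ar A} :
    Finite (Cons AA) :=
  inferInstanceAs (Finite (Σ R : σ, {u : Fin (ar R) → A // u ∈ AA.rel R}))

noncomputable instance Cons.fintype {A : Type} [Fintype σ] [Fintype A] {AA : Struct σ ar A} :
    Fintype (Cons AA) := Fintype.ofFinite _

/-- Labels `(S, R)` with `R ∈ σ` and `S ⊆ [arity R]`. -/
abbrev Label (σ : Type) (ar : σ → ℕ) : Type := Σ R : σ, Finset (Fin (ar R))

/-- The entry of the matrix representation `M_AA` of a structure at `(a, R(𝐚))`: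
the label `(S, R)` with `S = {i : 𝐚[i] = a}`. -/
def lab {A : Type} (AA : Struct σ ar A) (a : A) (c : Cons AA) : Label σ ar :=
  ⟨c.1, Finset.univ.filter fun i => c.2.1 i = a⟩

/-- The 0/1 matrix `M_AA^ℓ`. -/
def labMat {A : Type} (AA : Struct σ ar A) (ℓ : Label σ ar) : Matrix A (Cons AA) ℝ :=
  fun a c => if lab AA a c = ℓ then 1 else 0

/-- A doubly stochastic matrix: non-negative entries, all rows and all columns sum to 1. -/
def IsDoublyStochastic {α β : Type} [Fintype α] [Fintype β] (X : Matrix α β ℝ) : Prop :=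
  (∀ i j, 0 ≤ X i j) ∧ (∀ i, ∑ j, X i j = 1) ∧ (∀ j, ∑ i, X i j = 1)

/-- A left stochastic matrix: non-negative entries, all columns sum to 1. -/
def IsLeftStochastic {α β : Type} [Fintype α] (X : Matrix α β ℝ) : Prop :=
  (∀ i j, 0 ≤ X i j) ∧ (∀ j, ∑ i, X i j = 1)

/-- Fractional isomorphism: doubly stochastic `X`, `Y` with
`X M_AA^ℓ = M_BB^ℓ Y` and `M_AA^ℓ Yᵀ = Xᵀ M_BB^ℓ` for every label `ℓ`. -/
def FracIso {A B : Type} [Fintype σ] [Fintype A] [Fintype B]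
    (AA : Struct σ ar A) (BB : Struct σ ar B) : Prop :=
  ∃ (X : Matrix B A ℝ) (Y : Matrix (Cons BB) (Cons AA) ℝ),
    IsDoublyStochastic X ∧ IsDoublyStochastic Y ∧
    ∀ ℓ : Label σ ar,
      X * labMat AA ℓ = labMat BB ℓ * Y ∧
      labMat AA ℓ * Y.transpose = X.transpose * labMat BB ℓ

/-- The type of iterated degrees of depth `k`. -/
def DegT (L : Type) : ℕ → Type
  | 0 => Bool
  | k + 1 => Multiset (L × DegT L k)

/-- The iterated degree `δ_k` of an element or a constraint of a structure. -/
def iterDeg {A : Type} [Fintype σ] [Fintype A] (AA : Struct σ ar A) :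
    (k : ℕ) → A ⊕ Cons AA → DegT (Label σ ar) k
  | 0, x => x.isLeft
  | k + 1, Sum.inl a =>
      (Finset.univ.val.map fun c : Cons AA => (lab AA a c, iterDeg AA k (Sum.inr c)) :
        Multiset (Label σ ar × DegT (Label σ ar) k))
  | k + 1, Sum.inr c =>
      (Finset.univ.val.map fun a : A => (lab AA a c, iterDeg AA k (Sum.inl a)) :
        Multiset (Label σ ar × DegT (Label σ ar) k))

/-- Two structures have the same iterated degree sequence. -/
def SameIterDeg {A B : Type} [Fintype σ] [Fintype A] [Fintype B]
    (AA : Struct σ ar A) (BB : Struct σ ar B) : Prop :=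
  ∀ k : ℕ,
    Multiset.map (iterDeg AA k) (Finset.univ.val : Multiset (A ⊕ Cons AA)) =
    Multiset.map (iterDeg BB k) (Finset.univ.val : Multiset (B ⊕ Cons BB))
/-- An equitable partition of a structure, given by index maps `p` (on the universe)
and `q` (on the constraints) together with its parameters `cpar`, `dpar`. -/
def IsEquitable {A : Type} (AA : Struct σ ar A) {I : Type u} {J : Type v}
    (p : A → I) (q : Cons AA → J)
    (cpar : Label σ ar → I → J → ℕ) (dpar : Label σ ar → J → I → ℕ) : Prop :=
  (∀ (a : A) (ℓ : Label σ ar) (j : J),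
      Nat.card {c : Cons AA // q c = j ∧ lab AA a c = ℓ} = cpar ℓ (p a) j) ∧
  (∀ (c : Cons AA) (ℓ : Label σ ar) (i : I),
      Nat.card {a : A // p a = i ∧ lab AA a c = ℓ} = dpar ℓ (q c) i)

/-- Two structures have a common equitable partition: equitable partitions with the same
index sets, the same parameters, and corresponding classes of equal sizes. -/
def CommonEquitable {A B : Type} (AA : Struct σ ar A) (BB : Struct σ ar B) : Prop :=
  ∃ (I J : Type) (pA : A → I) (qA : Cons AA → J) (pB : B → I) (qB : Cons BB → J)
    (cpar : Label σ ar → I → J → ℕ) (dpar : Label σ ar → J → I → ℕ),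
    IsEquitable AA pA qA cpar dpar ∧ IsEquitable BB pB qB cpar dpar ∧
    (∀ i : I, Nat.card {a : A // pA a = i} = Nat.card {b : B // pB b = i}) ∧
    (∀ j : J, Nat.card {c : Cons AA // qA c = j} = Nat.card {c : Cons BB // qB c = j})

/-- `h` is a homomorphism from `AA` to `BB`. -/
def IsHom {A B : Type} (AA : Struct σ ar A) (BB : Struct σ ar B) (h : A → B) : Prop :=
  ∀ (R : σ) (u : Fin (ar R) → A), u ∈ AA.rel R → (fun i => h (u i)) ∈ BB.rel R

/-- The number of homomorphisms from `AA` to `BB`. -/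
def homCount {A B : Type} (AA : Struct σ ar A) (BB : Struct σ ar B) : ℕ :=
  Nat.card {h : A → B // IsHom AA BB h}

/-- The number of homomorphisms from `(TT, t)` to `(DD, d)` (with a designated element). -/
def rhomCount {T D : Type} (TT : Struct σ ar T) (t : T) (DD : Struct σ ar D) (d : D) : ℕ :=
  Nat.card {h : T → D // IsHom TT DD h ∧ h t = d}

/-- The factor graph of a structure: bipartite graph on elements and constraints. -/
def factorGraph {A : Type} (AA : Struct σ ar A) : SimpleGraph (A ⊕ Cons AA) :=
  SimpleGraph.fromRel fun x y =>
    ∃ (a : A) (c : Cons AA), x = Sum.inl a ∧ y = Sum.inr c ∧ ∃ i, c.2.1 i = a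

/-- A structure is an ftree if its factor graph is a tree. -/
def IsFtree {A : Type} (AA : Struct σ ar A) : Prop := (factorGraph AA).IsTree
/-- The set `{𝐚}` of elements occurring in the tuple of a constraint, as a Finset. -/
def tsupp {A : Type} {AA : Struct σ ar A} (c : Cons AA) : Finset A :=
  Finset.univ.image c.2.1

lemma mem_tsupp {A : Type} {AA : Struct σ ar A} (c : Cons AA) (i : Fin (ar c.1)) :
    c.2.1 i ∈ tsupp c :=
  Finset.mem_image_of_mem _ (Finset.mem_univ i)

/-- Feasibility of the system `SA^k(AA, BB)`. -/
def SAfeasible {A B : Type} [Fintype B] (k : ℕ)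
    (AA : Struct σ ar A) (BB : Struct σ ar B) : Prop :=
  ∃ (pV : (V : Finset A) → ({x // x ∈ V} → B) → ℝ)
    (pC : (c : Cons AA) → ({x // x ∈ tsupp c} → B) → ℝ),
    -- all variables take values in [0,1]
    (∀ (V : Finset A) (f : {x // x ∈ V} → B),
        V.Nonempty → V.card ≤ k → 0 ≤ pV V f ∧ pV V f ≤ 1) ∧
    (∀ (c : Cons AA) (f : {x // x ∈ tsupp c} → B), 0 ≤ pC c f ∧ pC c f ≤ 1) ∧
    -- (SA1)
    (∀ V : Finset A, V.Nonempty → V.card ≤ k →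
        ∑ f : {x // x ∈ V} → B, pV V f = 1) ∧
    -- (SA2)
    (∀ (U V : Finset A) (hUV : U ⊆ V), U.Nonempty → V.card ≤ k →
        ∀ f : {x // x ∈ U} → B,
          pV U f = ∑ g : {x // x ∈ V} → B,
            if ∀ u : {x // x ∈ U}, g ⟨u.1, hUV u.2⟩ = f u then pV V g else 0) ∧
    -- (SA3)
    (∀ (c : Cons AA) (U : Finset A) (hU : U ⊆ tsupp c), U.Nonempty → U.card ≤ k →
        ∀ f : {x // x ∈ U} → B,
          pV U f = ∑ g : {x // x ∈ tsupp c} → B,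
            if ∀ u : {x // x ∈ U}, g ⟨u.1, hU u.2⟩ = f u then pC c g else 0) ∧
    -- (SA4)
    (∀ (c : Cons AA) (f : {x // x ∈ tsupp c} → B),
        (fun i => f ⟨c.2.1 i, mem_tsupp c i⟩) ∉ BB.rel c.1 → pC c f = 0)

/-- The relation symbols of the signature `σ*_k`. -/
inductive StarSym (σ : Type) (ar : σ → ℕ) (k : ℕ) : Type
  | TS (j : Fin k) (S : Finset (Fin (j.1 + 1)))
  | TI (j j' : Fin k) (iv : Fin (j'.1 + 1) → Fin (j.1 + 1))
  | RS (R : σ) (S : Finset (Fin (ar R)))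
  | RI (R : σ) (j : Fin k) (iv : Fin (j.1 + 1) → Fin (ar R))

/-- Arities for `σ*_k`. -/
def starAr {k : ℕ} : StarSym σ ar k → ℕ
  | .TS _ _ => 1
  | .TI _ _ _ => 2
  | .RS _ _ => 1
  | .RI _ _ _ => 2

/-- The universe of `AA*_k`: all tuples of length `1 ≤ j ≤ k` together with the constraints. -/
def StarUniv {A : Type} (AA : Struct σ ar A) (k : ℕ) : Type :=
  ((j : Fin k) × (Fin (j.1 + 1) → A)) ⊕ Cons AA

instance StarUniv.finite {A : Type} [Finite σ] [Finite A] {AA : Struct σ ar A} {k : ℕ} :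
    Finite (StarUniv AA k) :=
  inferInstanceAs (Finite (((j : Fin k) × (Fin (j.1 + 1) → A)) ⊕ Cons AA))

noncomputable instance StarUniv.fintype {A : Type} [Fintype σ] [Fintype A]
    {AA : Struct σ ar A} {k : ℕ} : Fintype (StarUniv AA k) := Fintype.ofFinite _

/-- The structure `AA*_k`. -/
def starStruct {A : Type} (AA : Struct σ ar A) (k : ℕ) :
    Struct (StarSym σ ar k) starAr (StarUniv AA k) where
  rel
    | .TS j S => {u | ∃ v : Fin (j.1 + 1) → A,
        (∀ i ∈ S, ∀ i' ∈ S, v i = v i') ∧ u = fun _ => Sum.inl ⟨j, v⟩}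
    | .TI j j' iv => {u | ∃ v : Fin (j.1 + 1) → A,
        u = ![Sum.inl ⟨j, v⟩, Sum.inl ⟨j', v ∘ iv⟩]}
    | .RS R S => {u | ∃ (v : Fin (ar R) → A) (hv : v ∈ AA.rel R),
        (∀ i ∈ S, ∀ i' ∈ S, v i = v i') ∧ u = fun _ => Sum.inr ⟨R, ⟨v, hv⟩⟩}
    | .RI R j iv => {u | ∃ (v : Fin (ar R) → A) (hv : v ∈ AA.rel R),
        u = ![Sum.inr ⟨R, ⟨v, hv⟩⟩, Sum.inl ⟨j, v ∘ iv⟩]}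

/-- `AA ≡_k BB` : the structures `AA*_k` and `BB*_k` have a common equitable partition. -/
def EquivK {A B : Type} (k : ℕ) (AA : Struct σ ar A) (BB : Struct σ ar B) : Prop :=
  CommonEquitable (starStruct AA k) (starStruct BB k)

/-- A bundled σ-structure with finite universe. -/
structure FinStruct (σ : Type) (ar : σ → ℕ) : Type 1 where
  carrier : Type
  [fin : Fintype carrier]
  str : Struct σ ar carrier

/-- One step in a chain: either a homomorphism exists, or the structures are
`≡_1`-equivalent (i.e. have a common equitable partition). -/
def FStep (X Y : FinStruct σ ar) : Prop :=
  (∃ h : X.carrier → Y.carrier, IsHom X.str Y.str h) ∨ CommonEquitable X.str Y.str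

/-- The structure `AA` has treewidth `< k`: there is a tree-decomposition all of whose
bags have at most `k` elements. -/
def HasTreewidthLT {A : Type} (AA : Struct σ ar A) (k : ℕ) : Prop :=
  ∃ (V : Type) (G : SimpleGraph V) (β : V → Finset A),
    G.IsTree ∧
    (∀ c : Cons AA, ∃ v : V, ∀ i, c.2.1 i ∈ β v) ∧
    (∀ (a : A) (u v : V), a ∈ β u → a ∈ β v →
      ∀ p : G.Walk u v, p.IsPath → ∀ w ∈ p.support, a ∈ β w) ∧
    (∀ v : V, (β v).card ≤ k)
/-- The adjacency matrix of a graph (a structure with one binary relation). -/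
def adjMat {A : Type} (AA : Struct Unit (fun _ => 2) A) : Matrix A A ℝ :=
  fun a a' => if ![a, a'] ∈ AA.rel () then 1 else 0

/-- A matrix is decomposable if, up to partitioning rows and columns into two
(nontrivial) blocks, it is a direct sum. -/
def MDecomposable {V W : Type} (M : Matrix V W ℝ) : Prop :=
  ∃ (SV : Set V) (SW : Set W),
    (SV.Nonempty ∨ SW.Nonempty) ∧ (SVᶜ.Nonempty ∨ SWᶜ.Nonempty) ∧
    ∀ v w, (v ∈ SV ∧ w ∉ SW) ∨ (v ∉ SV ∧ w ∈ SW) → M v w = 0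

/-- A bundled rooted ftree. -/
structure RootedFtree (σ : Type) (ar : σ → ℕ) : Type 1 where
  carrier : Type
  [fin : Fintype carrier]
  str : Struct σ ar carrier
  isFtree : IsFtree str
  root : carrier

/-- The profile of an element: the number of homomorphisms from each rooted ftree
mapping the root to it. -/
def degProfile {D : Type} (DD : Struct σ ar D) (d : D) : RootedFtree σ ar → ℕ :=
  fun F => rhomCount F.str F.root DD d

/-- The class of a constraint: its relation symbol, its equality pattern, and the
`degProfile`-classes of its coordinates. -/
def qProfile {D : Type} (DD : Struct σ ar D) (c : Cons DD) :
    Σ R : σ, Set (Fin (ar R) × Fin (ar R)) × (Fin (ar R) → (RootedFtree σ ar → ℕ)) :=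
  ⟨c.1, ({p | c.2.1 p.1 = c.2.1 p.2}, fun s => degProfile DD (c.2.1 s))⟩

/-- Number of homomorphisms with a designated element and a designated constraint. -/
def rhomCount2 {T D : Type} (TT : Struct σ ar T) (t : T) (c : Cons TT)
    (DD : Struct σ ar D) (d : D) (c' : Cons DD) : ℕ :=
  Nat.card {h : T → D // IsHom TT DD h ∧ h t = d ∧
    (⟨c.1, fun i => h (c.2.1 i)⟩ : Σ R : σ, Fin (ar R) → D) = ⟨c'.1, c'.2.1⟩}

/-- `(t, R(𝐭))` can be mapped to `(d, R'(𝐝))`. -/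
def CanMap {T D : Type} {TT : Struct σ ar T} {DD : Struct σ ar D}
    (t : T) (c : Cons TT) (d : D) (c' : Cons DD) : Prop :=
  ∃ hR : c.1 = c'.1,
    (∀ s s' : Fin (ar c.1), c.2.1 s = c.2.1 s' →
        c'.2.1 (Fin.cast (congrArg ar hR) s) = c'.2.1 (Fin.cast (congrArg ar hR) s')) ∧
    (∀ s : Fin (ar c.1), c.2.1 s = t → c'.2.1 (Fin.cast (congrArg ar hR) s) = d)

/-- A substructure of a structure: a subset of the universe together with a subset of
the tuples of each relation, lying inside the subset. -/
structure Substr {A : Type} (AA : Struct σ ar A) : Type where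
  carrier : Set A
  srel : ∀ R : σ, Set (Fin (ar R) → A)
  srel_sub : ∀ R : σ, srel R ⊆ AA.rel R
  srel_mem : ∀ R : σ, ∀ u ∈ srel R, ∀ i, u i ∈ carrier

/-- The substructure as a structure in its own right. -/
def Substr.toStruct {A : Type} {AA : Struct σ ar A} (Q : Substr AA) :
    Struct σ ar {x // x ∈ Q.carrier} where
  rel R := {u | (fun i => (u i).1) ∈ Q.srel R}

/-- Containment of substructures. -/
def Substr.le {A : Type} {AA : Struct σ ar A} (Q Q' : Substr AA) : Prop :=
  Q.carrier ⊆ Q'.carrier ∧ ∀ R : σ, Q.srel R ⊆ Q'.srel R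

/-- A subftree of `TT` avoiding the constraint `c`, containing a unique element of the
tuple of `c`, which moreover participates in exactly one constraint of the subftree. -/
def GoodPiece {T : Type} (TT : Struct σ ar T) (c : Cons TT) (Q : Substr TT) : Prop :=
  IsFtree Q.toStruct ∧
  c.2.1 ∉ Q.srel c.1 ∧
  ∃ x ∈ Q.carrier, (∃ i, c.2.1 i = x) ∧
    (∀ y ∈ Q.carrier, (∃ i, c.2.1 i = y) → y = x) ∧
    (∃! e : Σ R : σ, {u // u ∈ Q.srel R}, ∃ i, e.2.1 i = x)

/-- The collection `TT \ c` of maximal subftrees as above. -/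
def TreeMinus {T : Type} (TT : Struct σ ar T) (c : Cons TT) : Set (Substr TT) :=
  {Q | GoodPiece TT c Q ∧ ∀ Q' : Substr TT, GoodPiece TT c Q' → Q.le Q' → Q'.le Q}

/-- The disjoint union of two structures. -/
def dUnion {A B : Type} (AA : Struct σ ar A) (BB : Struct σ ar B) :
    Struct σ ar (A ⊕ B) where
  rel R := {u | (∃ v ∈ AA.rel R, u = fun i => Sum.inl (v i)) ∨
                (∃ v ∈ BB.rel R, u = fun i => Sum.inr (v i))}

/-- Embedding of constraints of `AA` into constraints of the disjoint union. -/
def consInl {A B : Type} (AA : Struct σ ar A) (BB : Struct σ ar B) (c : Cons AA) :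
    Cons (dUnion AA BB) :=
  ⟨c.1, ⟨fun i => Sum.inl (c.2.1 i), Or.inl ⟨c.2.1, c.2.2, rfl⟩⟩⟩

/-- Embedding of constraints of `BB` into constraints of the disjoint union. -/
def consInr {A B : Type} (AA : Struct σ ar A) (BB : Struct σ ar B) (c : Cons BB) :
    Cons (dUnion AA BB) :=
  ⟨c.1, ⟨fun i => Sum.inr (c.2.1 i), Or.inr ⟨c.2.1, c.2.2, rfl⟩⟩⟩

/-- The stable-degree class of an element of the disjoint union: its full iterated
degree sequence. -/
def degPclass {A B : Type} [Fintype σ] [Fintype A] [Fintype B]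
    (AA : Struct σ ar A) (BB : Struct σ ar B) (x : A ⊕ B) :
    (k : ℕ) → DegT (Label σ ar) k :=
  fun k => iterDeg (dUnion AA BB) k (Sum.inl x)

/-- The stable-degree class of a constraint of the disjoint union. -/
def degQclass {A B : Type} [Fintype σ] [Fintype A] [Fintype B]
    (AA : Struct σ ar A) (BB : Struct σ ar B) (c : Cons (dUnion AA BB)) :
    (k : ℕ) → DegT (Label σ ar) k :=
  fun k => iterDeg (dUnion AA BB) k (Sum.inr c)
/-- The set `Y`: tuples in `(B × [m])^m` with no repeated entries, in which the copy
index of each entry is bounded by the number of occurrences of its `B`-component. -/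
def Ytype (B : Type) (m : ℕ) : Type :=
  {y : Fin m → B × Fin m // Function.Injective y ∧
    ∀ i, ((y i).2 : ℕ) + 1 ≤ Nat.card {j : Fin m // (y j).1 = (y i).1}}

/-- Permuting the coordinates of an element of `Y`. -/
def permY {B : Type} {m : ℕ} (τ : Equiv.Perm (Fin m)) (y : Ytype B m) : Ytype B m :=
  ⟨fun i => y.1 (τ i), y.2.1.comp τ.injective, fun i => by
    have h := y.2.2 (τ i)
    have hc : Nat.card {j : Fin m // (y.1 (τ j)).1 = (y.1 (τ i)).1}
        = Nat.card {j : Fin m // (y.1 j).1 = (y.1 (τ i)).1} :=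
      Nat.card_congr (τ.subtypeEquiv fun j => Iff.rfl)
    exact le_trans h (le_of_eq hc.symm)⟩

/-- The structure `X₁` from the proof of Theorem `thm:SA1`, built from a choice
function `choice` selecting a canonical element of `Y` for each multiset. -/
def X1struct {A B : Type} (AA : Struct σ ar A) (BB : Struct σ ar B) (m : ℕ)
    (choice : (Fin m → B) → Ytype B m) : Struct σ ar (A × Ytype B m) where
  rel R := {u | ∃ a : Fin (ar R) → A, a ∈ AA.rel R ∧
    ∃ tt : Fin m → Fin (ar R) → B,
      (∀ i, tt i ∈ BB.rel R) ∧
      (∀ i s s', a s = a s' → tt i s = tt i s') ∧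
      ∃ τ : Equiv.Perm (Fin m),
        u = fun s => (a s, permY τ (choice fun i => tt i s))}

/-!
Weight the homomorphisms from a rooted ftree `F` to `DD` and sum the weights according to the image
of the root; unit weights give the homomorphism count of `F` as a function on `D`. Gluing an ftree
`G` at an element `x` of `F` multiplies the weight of `h` by the homomorphism count of `G` at `h x`.
Hence the `ℚ`-span of the homomorphism counts is stable under weighting any element of `F` by a
function in the span, and in particular it is a subalgebra of `D → ℚ`. As two elements are in the
same class of `P` exactly when no function in the span separates them, a product of separating
functions shows that the span contains the indicator function of every class.

Now weight the positions of a single constraint `R`, with the equalities in `E` imposed on its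
entries, by indicator functions of classes. The resulting function of `d` lies in the span, and it
counts the tuples of `R` with entries in prescribed classes that satisfy at least the equalities in
`E` and have `d` at a given position. So these counts depend only on the class of `d`, and by
inclusion-exclusion the same holds if the equalities are to be exactly those in `E`. That settles
the labels `(S, R)` with `S` nonempty; the label `(∅, R)` follows by subtracting from the total.
-/

section TreeRank

variable {V : Type*} {G : SimpleGraph V} {r : V} {ρ : V → ℕ}

/-- A rank function witnessing that `G` is a tree with root `r`: the rank is `0` at the root, and
every other vertex has exactly one neighbour of smaller rank, its parent. -/
structure IsTreeRank (G : SimpleGraph V) (r : V) (ρ : V → ℕ) : Prop where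
  root : ρ r = 0
  ne_of_adj : ∀ v w, G.Adj v w → ρ v ≠ ρ w
  existsUnique_lower : ∀ v ≠ r, ∃! w, G.Adj v w ∧ ρ w < ρ v

theorem IsTreeRank.connected (h : IsTreeRank G r ρ) : G.Connected := by
  have reachable (n : ℕ) : ∀ v, ρ v = n → G.Reachable r v := by
    induction n using Nat.strong_induction_on with
    | _ n ih =>
      rintro v rfl
      obtain rfl | hv := eq_or_ne v r
      · exact .refl v
      · obtain ⟨w, ⟨hadj, hlt⟩, -⟩ := h.existsUnique_lower v hv
        exact (ih _ hlt w rfl).trans hadj.symm.reachable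
  exact (SimpleGraph.connected_iff_exists_forall_reachable G).2 ⟨r, fun v => reachable _ v rfl⟩

-- A vertex of maximal rank on a cycle would have two neighbours of smaller rank.
theorem IsTreeRank.isAcyclic (h : IsTreeRank G r ρ) : G.IsAcyclic := by
  intro u c hc
  obtain ⟨v, hv, hmax⟩ := c.support.toFinset.exists_max_image ρ ⟨u, by simp⟩
  rw [List.mem_toFinset] at hv
  set c' := c.rotate v hv
  have hc' : c'.IsCycle := hc.rotate hv
  have lower (w : V) (hw : w ∈ c'.support) (hadj : G.Adj v w) : ρ w < ρ v :=
    (hmax w (by simpa [c'] using hw)).lt_of_ne (h.ne_of_adj v w hadj).symm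
  have hsnd := c'.adj_snd hc'.not_nil
  have hpen := (c'.adj_penultimate hc'.not_nil).symm
  have hsnd_lt := lower _ (c'.getVert_mem_support _) hsnd
  have hv_ne : v ≠ r := by
    rintro rfl
    simp [h.root] at hsnd_lt
  exact hc'.snd_ne_penultimate <| (h.existsUnique_lower v hv_ne).unique ⟨hsnd, hsnd_lt⟩
    ⟨hpen, lower _ (c'.getVert_mem_support _) hpen⟩

theorem IsTreeRank.isTree (h : IsTreeRank G r ρ) : G.IsTree :=
  ⟨h.connected, h.isAcyclic⟩

theorem exists_adj_dist_lt (hG : G.Connected) {r v : V} (hv : v ≠ r) :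
    ∃ w, G.Adj v w ∧ G.dist r w < G.dist r v := by
  obtain ⟨p, hp⟩ := (hG v r).exists_walk_length_eq_dist
  cases p with
  | nil => exact absurd rfl hv
  | @cons _ w _ hadj q =>
    refine ⟨w, hadj, ?_⟩
    rw [SimpleGraph.dist_comm, G.dist_comm (u := r), ← hp, SimpleGraph.Walk.length_cons]
    exact Nat.lt_succ_of_le (SimpleGraph.dist_le q)

theorem eq_of_adj_of_dist_lt (hG : G.IsTree) {r v w w' : V} (hw : G.Adj v w) (hw' : G.Adj v w')
    (hlt : G.dist r w < G.dist r v) (hlt' : G.dist r w' < G.dist r v) : w = w' := by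
  have shortest (x : V) (hx : G.Adj v x) (hx_lt : G.dist r x < G.dist r v) :
      ∃ p : G.Walk r v, p.IsPath ∧ p.penultimate = x := by
    obtain ⟨q, hq⟩ := (hG.connected r x).exists_walk_length_eq_dist
    have hdist := hG.dist_eq_dist_add_one_of_adj r hx
    refine ⟨q.concat hx.symm, SimpleGraph.Walk.isPath_of_length_eq_dist _ ?_, by simp⟩
    rw [SimpleGraph.Walk.length_concat]
    omega
  obtain ⟨p, hp, rfl⟩ := shortest w hw hlt
  obtain ⟨p', hp', rfl⟩ := shortest w' hw' hlt'
  rw [(hG.existsUnique_path r v).unique hp hp']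

theorem isTreeRank_dist (hG : G.IsTree) (r : V) : IsTreeRank G r (G.dist r) where
  root := SimpleGraph.dist_self
  ne_of_adj _ _ hadj := hG.dist_ne_of_adj r hadj
  existsUnique_lower v hv := by
    obtain ⟨w, hadj, hlt⟩ := exists_adj_dist_lt hG.connected hv
    exact ⟨w, ⟨hadj, hlt⟩, fun w' h' => eq_of_adj_of_dist_lt hG h'.1 hadj h'.2 hlt⟩

end TreeRank

section Ranking

variable {A B : Type} {AA : Struct σ ar A} {BB : Struct σ ar B} {n : ℕ} {t : A}

/-- The tuple `u` has an apex: an entry whose rank is smaller than that of all other entries. In a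
rooted ftree this is the entry through which the constraint hangs from the root. -/
def HasApex (r : A → ℕ) (u : Fin n → A) : Prop :=
  ∃ i, ∀ j, u j = u i ∨ r (u i) < r (u j)

/-- `a` is an entry of the tuple `u` that is not of minimal rank. In a rooted ftree this says that
`a` is a child of the constraint with tuple `u`. -/
def IsBelow (r : A → ℕ) (u : Fin n → A) (a : A) : Prop :=
  a ∈ Set.range u ∧ ∃ j, r (u j) < r a

theorem hasApex_comp {f : A → B} (hf : f.Injective) {r : B → ℕ} {u : Fin n → A} :
    HasApex r (f ∘ u) ↔ HasApex (r ∘ f) u := by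
  simp only [HasApex, Function.comp_apply, hf.eq_iff]

theorem isBelow_comp {f : A → B} (hf : f.Injective) {r : B → ℕ} {u : Fin n → A} {a : A} :
    IsBelow r (f ∘ u) (f a) ↔ IsBelow (r ∘ f) u a := by
  simp only [IsBelow, Function.comp_apply, Set.range_comp, hf.mem_set_image]

theorem hasApex_const_add {r : A → ℕ} {u : Fin n → A} (k : ℕ) :
    HasApex (fun a => k + r a) u ↔ HasApex r u := by
  simp only [HasApex, add_lt_add_iff_left]

theorem isBelow_const_add {r : A → ℕ} {u : Fin n → A} {a : A} (k : ℕ) :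
    IsBelow (fun a => k + r a) u a ↔ IsBelow r u a := by
  simp only [IsBelow, add_lt_add_iff_left]

/-- A rank function on the elements of `AA` witnessing that `AA` is an ftree rooted at `t`. It
replaces the distances in the factor graph by data that behave well under gluing. -/
structure IsRanking (AA : Struct σ ar A) (t : A) (r : A → ℕ) : Prop where
  root : r t = 0
  hasApex : ∀ c : Cons AA, HasApex r c.2.1
  existsUnique_isBelow : ∀ a ≠ t, ∃! c : Cons AA, IsBelow r c.2.1 a

@[simp]
theorem factorGraph_adj_inl_inr {a : A} {c : Cons AA} :
    (factorGraph AA).Adj (.inl a) (.inr c) ↔ a ∈ Set.range c.2.1 := by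
  simp [factorGraph, eq_comm]

@[simp]
theorem factorGraph_adj_inr_inl {a : A} {c : Cons AA} :
    (factorGraph AA).Adj (.inr c) (.inl a) ↔ a ∈ Set.range c.2.1 := by
  simp [factorGraph, eq_comm]

@[simp]
theorem not_factorGraph_adj_inl_inl {a b : A} : ¬ (factorGraph AA).Adj (.inl a) (.inl b) := by
  simp [factorGraph]

@[simp]
theorem not_factorGraph_adj_inr_inr {c c' : Cons AA} :
    ¬ (factorGraph AA).Adj (.inr c) (.inr c') := by
  simp [factorGraph]

-- In the factor graph, constraints sit halfway between their apex and their other entries.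
theorem IsRanking.isFtree {r : A → ℕ} (h : IsRanking AA t r) : IsFtree AA := by
  choose i hi using h.hasApex
  have isBelow_iff (c : Cons AA) (a : A) :
      IsBelow r c.2.1 a ↔ a ∈ Set.range c.2.1 ∧ r (c.2.1 (i c)) < r a := by
    refine and_congr_right fun _ => ⟨?_, fun hlt => ⟨i c, hlt⟩⟩
    rintro ⟨j, hj⟩
    rcases hi c j with heq | hlt
    · rwa [← heq]
    · exact hlt.trans hj
  refine IsTreeRank.isTree (r := .inl t)
    (ρ := Sum.elim (fun a => 2 * r a) (fun c => 2 * r (c.2.1 (i c)) + 1)) ⟨?_, ?_, ?_⟩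
  · simp [h.root]
  · rintro (a | c) (b | c') hadj <;> simp at hadj ⊢ <;> omega
  · rintro (a | c) hv
    · obtain ⟨c, hc, hunique⟩ := h.existsUnique_isBelow a (by simpa using hv)
      simp only [isBelow_iff] at hc hunique
      refine ⟨.inr c, ⟨by simpa using hc.1, by simp; omega⟩, ?_⟩
      rintro (b | c') ⟨hadj, hlt⟩
      · simp at hadj
      · simp only [factorGraph_adj_inl_inr, Sum.elim_inl, Sum.elim_inr] at hadj hlt
        rw [hunique c' ⟨hadj, by omega⟩]
    · refine ⟨.inl (c.2.1 (i c)), by simp, ?_⟩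
      rintro (b | c') ⟨hadj, hlt⟩
      · obtain ⟨j, rfl⟩ := factorGraph_adj_inr_inl.1 hadj
        simp only [Sum.elim_inl, Sum.elim_inr] at hlt
        rw [(hi c j).resolve_right (by omega)]
      · simp at hadj

theorem IsFtree.exists_isRanking (h : IsFtree AA) (t : A) : ∃ r, IsRanking AA t r := by
  set dist := (factorGraph AA).dist (.inl t)
  have hdist : IsTreeRank (factorGraph AA) (.inl t) dist := isTreeRank_dist h _
  have exists_parent (c : Cons AA) :
      ∃ i, dist (.inl (c.2.1 i)) < dist (.inr c) ∧
        ∀ j, c.2.1 j = c.2.1 i ∨ dist (.inr c) < dist (.inl (c.2.1 j)) := by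
    obtain ⟨b | c', ⟨hadj, hlt⟩, hunique⟩ := hdist.existsUnique_lower (.inr c) (by simp)
    · obtain ⟨i, rfl⟩ := factorGraph_adj_inr_inl.1 hadj
      refine ⟨i, hlt, fun j => or_iff_not_imp_right.2 fun hj => ?_⟩
      have hadj_j : (factorGraph AA).Adj (.inr c) (.inl (c.2.1 j)) := by simp
      exact Sum.inl_injective <| hunique _
        ⟨hadj_j, (not_lt.1 hj).lt_of_ne (hdist.ne_of_adj _ _ hadj_j).symm⟩
    · simp at hadj
  choose i hi_lt hi using exists_parent
  refine ⟨fun a => dist (.inl a), hdist.root, fun c => ⟨i c, fun j => ?_⟩, fun a ha => ?_⟩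
  · exact (hi c j).imp_right (hi_lt c).trans
  · obtain ⟨b | c, ⟨hadj, hlt⟩, hunique⟩ := hdist.existsUnique_lower (.inl a) (by simpa using ha)
    · simp at hadj
    · refine ⟨c, ⟨factorGraph_adj_inl_inr.1 hadj, i c, (hi_lt c).trans hlt⟩, ?_⟩
      rintro c' ⟨⟨j, rfl⟩, k, hk⟩
      have hlt' := (hi c' j).resolve_left fun heq => by
        rw [heq] at hk
        rcases hi c' k with heq' | hlt'
        · simp [heq'] at hk
        · exact (hk.trans (hi_lt c')).not_gt hlt'
      exact Sum.inr_injective <| hunique _ ⟨by simp, hlt'⟩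

end Ranking

section Glue

variable {T U D : Type} {TT : Struct σ ar T} {UU : Struct σ ar U} {DD : Struct σ ar D}
  {x : T} {t : U}

/-- The constraint of `BB` that is the image of a constraint of `AA` under a homomorphism. -/
def IsHom.mapCons {A B : Type} {AA : Struct σ ar A} {BB : Struct σ ar B} {f : A → B}
    (hf : IsHom AA BB f) (c : Cons AA) : Cons BB :=
  ⟨c.1, f ∘ c.2.1, hf c.1 c.2.1 c.2.2⟩

/-- The embedding of `U` into the result of gluing `U` to `T` by identifying `t : U` with
`x : T`. -/
def glueEmb (x : T) (t : U) (y : U) : T ⊕ {y : U // y ≠ t} :=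
  if h : y = t then .inl x else .inr ⟨y, h⟩

theorem glueEmb_self : glueEmb x t t = .inl x := dif_pos rfl

theorem glueEmb_of_ne {y : U} (hy : y ≠ t) : glueEmb x t y = .inr ⟨y, hy⟩ := dif_neg hy

theorem glueEmb_eq_inl_iff {y : U} {a : T} : glueEmb x t y = .inl a ↔ y = t ∧ a = x := by
  by_cases hy : y = t
  · simp [hy, glueEmb_self, eq_comm]
  · simp [hy, glueEmb_of_ne]

theorem glueEmb_injective : (glueEmb x t).Injective := by
  intro y z h
  by_cases hz : z = t
  · rw [hz, glueEmb_self] at h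
    exact (glueEmb_eq_inl_iff.1 h).1.trans hz.symm
  · by_cases hy : y = t
    · rw [hy, glueEmb_self] at h
      exact absurd (glueEmb_eq_inl_iff.1 h.symm).1 hz
    · simpa [glueEmb_of_ne, hy, hz] using h

theorem elim_comp_glueEmb {h : T → D} {g : U → D} (hg : g t = h x) :
    (Sum.elim h fun y => g y.1) ∘ glueEmb x t = g := by
  funext y
  by_cases hy : y = t
  · simp [hy, glueEmb_self, hg]
  · simp [glueEmb_of_ne, hy]

/-- The structure obtained from the disjoint union of `TT` and `UU` by identifying `x` and `t`. -/
def glue (TT : Struct σ ar T) (x : T) (UU : Struct σ ar U) (t : U) :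
    Struct σ ar (T ⊕ {y : U // y ≠ t}) where
  rel R := (fun u => Sum.inl ∘ u) '' TT.rel R ∪ (fun u => glueEmb x t ∘ u) '' UU.rel R

theorem isHom_inl : IsHom TT (glue TT x UU t) Sum.inl :=
  fun _ u hu => .inl ⟨u, hu, rfl⟩

theorem isHom_glueEmb : IsHom UU (glue TT x UU t) (glueEmb x t) :=
  fun _ u hu => .inr ⟨u, hu, rfl⟩

theorem cons_glue_cases (c : Cons (glue TT x UU t)) :
    (∃ c', c = isHom_inl.mapCons c') ∨ ∃ c', c = isHom_glueEmb.mapCons c' := by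
  obtain ⟨R, _, ⟨u, hu, rfl⟩ | ⟨u, hu, rfl⟩⟩ := c
  · exact .inl ⟨⟨R, u, hu⟩, rfl⟩
  · exact .inr ⟨⟨R, u, hu⟩, rfl⟩

theorem isHom_glue_iff {h : T ⊕ {y : U // y ≠ t} → D} :
    IsHom (glue TT x UU t) DD h ↔ IsHom TT DD (h ∘ .inl) ∧ IsHom UU DD (h ∘ glueEmb x t) := by
  refine ⟨fun hh => ⟨fun R u hu => hh R _ (isHom_inl R u hu),
    fun R u hu => hh R _ (isHom_glueEmb R u hu)⟩, ?_⟩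
  rintro ⟨hT, hU⟩ R _ (⟨u, hu, rfl⟩ | ⟨u, hu, rfl⟩)
  · exact hT R u hu
  · exact hU R u hu

/-- The rank function on a glued tree, where the second tree hangs from the vertex `x` of the
first. -/
def glueRank (r : T → ℕ) (x : T) (q : U → ℕ) : T ⊕ {y : U // y ≠ t} → ℕ :=
  Sum.elim r fun y => r x + q y

theorem glueRank_comp_glueEmb {r : T → ℕ} {q : U → ℕ} (hq : q t = 0) :
    glueRank r x q ∘ glueEmb x t = fun y => r x + q y := by
  funext y
  by_cases hy : y = t
  · simp [glueRank, glueEmb_self, hy, hq]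
  · simp [glueRank, glueEmb_of_ne, hy]

variable {s : T} {r : T → ℕ} {q : U → ℕ}

theorem existsUnique_isBelow_glue_inl (hr : IsRanking TT s r) (hq : IsRanking UU t q)
    {a : T} (ha : a ≠ s) :
    ∃! c : Cons (glue TT x UU t), IsBelow (glueRank r x q) c.2.1 (.inl a) := by
  obtain ⟨c, hc, hunique⟩ := hr.existsUnique_isBelow a ha
  refine ⟨isHom_inl.mapCons c, (isBelow_comp Sum.inl_injective).2 hc, fun c' hc' => ?_⟩
  obtain ⟨c', rfl⟩ | ⟨c', rfl⟩ := cons_glue_cases c'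
  · rw [hunique c' ((isBelow_comp Sum.inl_injective).1 hc')]
  · exfalso
    obtain ⟨⟨j, hj⟩, hbelow⟩ := hc'
    obtain ⟨hjt, rfl⟩ := glueEmb_eq_inl_iff.1 hj
    obtain ⟨-, k, hk⟩ : IsBelow q c'.2.1 t := by
      rw [← isBelow_const_add (r a), ← glueRank_comp_glueEmb hq.root,
        ← isBelow_comp glueEmb_injective, glueEmb_self]
      exact ⟨⟨j, hj⟩, hbelow⟩
    simp [hq.root] at hk

theorem existsUnique_isBelow_glue_inr (hq : IsRanking UU t q) (y : {y : U // y ≠ t}) :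
    ∃! c : Cons (glue TT x UU t), IsBelow (glueRank r x q) c.2.1 (.inr y) := by
  have isBelow_iff (c : Cons UU) :
      IsBelow (glueRank r x q) ((isHom_glueEmb (TT := TT) (x := x)).mapCons c).2.1 (.inr y) ↔
        IsBelow q c.2.1 y := by
    rw [← glueEmb_of_ne (x := x) y.2]
    refine (isBelow_comp glueEmb_injective).trans ?_
    rw [glueRank_comp_glueEmb hq.root]
    exact isBelow_const_add (r x)
  obtain ⟨c, hc, hunique⟩ := hq.existsUnique_isBelow y y.2
  refine ⟨isHom_glueEmb.mapCons c, (isBelow_iff c).2 hc, fun c' hc' => ?_⟩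
  obtain ⟨c', rfl⟩ | ⟨c', rfl⟩ := cons_glue_cases c'
  · obtain ⟨⟨j, hj⟩, -⟩ := hc'
    exact absurd hj Sum.inl_ne_inr
  · rw [hunique c' ((isBelow_iff c').1 hc')]

theorem IsRanking.glue (hr : IsRanking TT s r) (hq : IsRanking UU t q) :
    IsRanking (glue TT x UU t) (.inl s) (glueRank r x q) where
  root := hr.root
  hasApex c := by
    obtain ⟨c, rfl⟩ | ⟨c, rfl⟩ := cons_glue_cases c
    · exact (hasApex_comp Sum.inl_injective).2 (hr.hasApex c)
    · have hc := (hasApex_const_add (r x)).2 (hq.hasApex c)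
      rw [← glueRank_comp_glueEmb hq.root] at hc
      exact (hasApex_comp glueEmb_injective).2 hc
  existsUnique_isBelow
    | .inl _, ha => existsUnique_isBelow_glue_inl hr hq fun h => ha (congrArg _ h)
    | .inr y, _ => existsUnique_isBelow_glue_inr hq y

end Glue

section Single

variable {A D : Type} {DD : Struct σ ar D} {R : σ} {v : Fin (ar R) → A}

/-- The structure whose only constraint is `R(v)`. -/
def Struct.single (R : σ) (v : Fin (ar R) → A) : Struct σ ar A where
  rel R' := {u | (⟨R', u⟩ : Σ R : σ, Fin (ar R) → A) = ⟨R, v⟩}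

theorem isHom_single_iff {h : A → D} : IsHom (Struct.single R v) DD h ↔ h ∘ v ∈ DD.rel R := by
  refine ⟨fun hh => hh R v rfl, ?_⟩
  rintro hh _ _ ⟨⟩
  exact hh

theorem isRanking_single (hv : v.Surjective) (s : Fin (ar R)) :
    IsRanking (Struct.single R v) (v s) fun a => if a = v s then 0 else 1 where
  root := if_pos rfl
  hasApex := by
    rintro ⟨_, _, ⟨⟩⟩
    exact ⟨s, fun j => by by_cases hj : v j = v s <;> simp [hj]⟩
  existsUnique_isBelow a ha := by
    refine ⟨⟨R, v, rfl⟩, ⟨hv a, s, by simp [ha]⟩, ?_⟩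
    rintro ⟨_, _, ⟨⟩⟩ -
    rfl

end Single

attribute [instance] RootedFtree.fin

namespace RootedFtree

/-- The rooted ftree with a single element and no constraints. -/
def point (σ : Type) (ar : σ → ℕ) : RootedFtree σ ar where
  carrier := Unit
  str := ⟨fun _ => ∅⟩
  isFtree := IsRanking.isFtree (t := ()) (r := 0)
    ⟨rfl, fun c => c.2.2.elim, fun _ h => absurd rfl h⟩
  root := ()

/-- The rooted ftree obtained by identifying the element `x` of `F` with the root of `G`. -/
def glue (F : RootedFtree σ ar) (x : F.carrier) (G : RootedFtree σ ar) : RootedFtree σ ar where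
  carrier := F.carrier ⊕ {y : G.carrier // y ≠ G.root}
  str := _root_.glue F.str x G.str G.root
  isFtree := by
    obtain ⟨r, hr⟩ := F.isFtree.exists_isRanking F.root
    obtain ⟨q, hq⟩ := G.isFtree.exists_isRanking G.root
    exact (hr.glue hq).isFtree
  root := .inl F.root

/-- The rooted ftree with a single constraint, with symbol `R`, in which exactly the positions
forced by `E` to coincide do so; the root is the element at position `s`. -/
def star (R : σ) (E : Set (Fin (ar R) × Fin (ar R))) (s : Fin (ar R)) : RootedFtree σ ar where
  carrier := Quot fun i j => (i, j) ∈ E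
  fin := Fintype.ofFinite _
  str := .single R (Quot.mk _)
  isFtree := (isRanking_single Quot.mk_surjective s).isFtree
  root := Quot.mk _ s

end RootedFtree

theorem indicator_mem_subalgebra {K D : Type*} [Field K] [Finite D] (S : Subalgebra K (D → K))
    (d₀ : D) : Set.indicator {d | ∀ f ∈ S, f d = f d₀} 1 ∈ S := by
  have := Fintype.ofFinite D
  have exists_separating (d : D) : ∃ f ∈ S, f d₀ = 1 ∧ ((∃ f ∈ S, f d ≠ f d₀) → f d = 0) := by
    by_cases hd : ∃ f ∈ S, f d ≠ f d₀
    · obtain ⟨f, hf, hne⟩ := hd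
      refine ⟨(f d₀ - f d)⁻¹ • (f - algebraMap K _ (f d)),
        S.smul_mem (S.sub_mem hf (S.algebraMap_mem _)) _, ?_, fun _ => ?_⟩
      · simp [inv_mul_cancel₀ (sub_ne_zero.2 hne.symm)]
      · simp
    · exact ⟨1, S.one_mem, rfl, fun h => absurd h hd⟩
  choose f hf hf_one hf_zero using exists_separating
  suffices Set.indicator {d | ∀ f ∈ S, f d = f d₀} 1 = ∏ d, f d from
    this ▸ S.prod_mem fun d _ => hf d
  funext e
  simp only [Finset.prod_apply, Set.indicator_apply, Set.mem_ofPred_eq]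
  split_ifs with he
  · exact (Finset.prod_eq_one fun d _ => (he _ (hf d)).trans (hf_one d)).symm
  · push Not at he
    exact (Finset.prod_eq_zero (f := fun d => f d e) (Finset.mem_univ e) (hf_zero e he)).symm

section HomSum

variable {D : Type} [Fintype D] (DD : Struct σ ar D)

/-- The homomorphisms from a rooted ftree to `DD` that map the root to `d`. -/
def rootedHoms (F : RootedFtree σ ar) (d : D) : Finset (F.carrier → D) :=
  {h | IsHom F.str DD h ∧ h F.root = d}

/-- The function on `D` sending `d` to the sum of the weights of the homomorphisms from `F` to `DD`
that map the root to `d`. -/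
def homSum (F : RootedFtree σ ar) : ((F.carrier → D) → ℚ) →ₗ[ℚ] D → ℚ :=
  LinearMap.pi fun d => ∑ h ∈ rootedHoms DD F d, LinearMap.proj h

/-- The function on `D` counting the homomorphisms from a rooted ftree by the image of the root. -/
def homVec (F : RootedFtree σ ar) : D → ℚ :=
  homSum DD F 1

/-- The functions on `D` that are linear combinations of homomorphism counts from rooted ftrees. -/
def homSpan : Submodule ℚ (D → ℚ) :=
  Submodule.span ℚ (Set.range (homVec DD))

variable {DD}

theorem mem_rootedHoms {F : RootedFtree σ ar} {d : D} {h : F.carrier → D} :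
    h ∈ rootedHoms DD F d ↔ IsHom F.str DD h ∧ h F.root = d := by
  simp [rootedHoms]

theorem homSum_apply (F : RootedFtree σ ar) (Φ : (F.carrier → D) → ℚ) (d : D) :
    homSum DD F Φ d = ∑ h ∈ rootedHoms DD F d, Φ h := by
  simp [homSum]

theorem homVec_apply (F : RootedFtree σ ar) (d : D) : homVec DD F d = degProfile DD d F := by
  rw [homVec, homSum_apply, degProfile, rhomCount, rootedHoms, Nat.card_eq_fintype_card,
    Fintype.card_subtype]
  simp

theorem card_rootedHoms_glue_fiber {F G : RootedFtree σ ar} {x : F.carrier} {d : D}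
    {h : F.carrier → D} (hh : h ∈ rootedHoms DD F d) :
    Finset.card {k ∈ rootedHoms DD (F.glue x G) d | k ∘ .inl = h} =
      (rootedHoms DD G (h x)).card := by
  refine Finset.card_nbij' (· ∘ glueEmb x G.root) (fun g => Sum.elim h fun y => g y.1) ?_ ?_ ?_ ?_
  · intro k hk
    obtain ⟨hk_mem, rfl⟩ := Finset.mem_filter.1 hk
    exact mem_rootedHoms.2 ⟨(isHom_glue_iff.1 (mem_rootedHoms.1 hk_mem).1).2,
      congrArg k glueEmb_self⟩
  · intro g hg
    obtain ⟨hg, hroot⟩ := mem_rootedHoms.1 hg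
    obtain ⟨hom_h, rfl⟩ := mem_rootedHoms.1 hh
    refine Finset.mem_filter.2 ⟨mem_rootedHoms.2 ⟨isHom_glue_iff.2 ⟨hom_h, ?_⟩, rfl⟩, rfl⟩
    rwa [elim_comp_glueEmb hroot]
  · intro k hk
    obtain ⟨-, rfl⟩ := Finset.mem_filter.1 hk
    funext z
    rcases z with a | y
    · rfl
    · exact congrArg k (glueEmb_of_ne y.2)
  · intro g hg
    exact elim_comp_glueEmb (mem_rootedHoms.1 hg).2

theorem homSum_glue (F : RootedFtree σ ar) (x : F.carrier) (G : RootedFtree σ ar)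
    (Φ : (F.carrier → D) → ℚ) :
    homSum DD (F.glue x G) (fun k => Φ (k ∘ .inl)) =
      homSum DD F fun h => Φ h * homVec DD G (h x) := by
  funext d
  have maps_to : ∀ k ∈ rootedHoms DD (F.glue x G) d, k ∘ .inl ∈ rootedHoms DD F d := fun k hk =>
    mem_rootedHoms.2 ⟨(isHom_glue_iff.1 (mem_rootedHoms.1 hk).1).1, (mem_rootedHoms.1 hk).2⟩
  rw [homSum_apply, homSum_apply, ← Finset.sum_fiberwise_of_maps_to maps_to]
  refine Finset.sum_congr rfl fun h hh => ?_
  calc ∑ k ∈ rootedHoms DD (F.glue x G) d with k ∘ .inl = h, Φ (k ∘ .inl)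
      = ∑ k ∈ rootedHoms DD (F.glue x G) d with k ∘ .inl = h, Φ h :=
        Finset.sum_congr rfl fun k hk => by rw [(Finset.mem_filter.1 hk).2]
    _ = Φ h * homVec DD G (h x) := by
        rw [Finset.sum_const, card_rootedHoms_glue_fiber hh, homVec, homSum_apply]
        simp [mul_comm]

theorem homSum_prod_mem_homSpan {ι : Type*} (s : Finset ι) (F : RootedFtree σ ar)
    (x : ι → F.carrier) {w : ι → D → ℚ} (hw : ∀ i ∈ s, w i ∈ homSpan DD) :
    homSum DD F (fun h => ∏ i ∈ s, w i (h (x i))) ∈ homSpan DD := by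
  induction s using Finset.induction generalizing F with
  | empty => exact Submodule.subset_span ⟨F, by simp [homVec, Pi.one_def]⟩
  | insert j s hj ih =>
    rw [Finset.forall_mem_insert] at hw
    -- By linearity it suffices to take `w j = homVec DD G`, which amounts to gluing `G` at `x j`.
    let weighted : (D → ℚ) →ₗ[ℚ] D → ℚ :=
      homSum DD F ∘ₗ LinearMap.mulLeft ℚ (fun h => ∏ i ∈ s, w i (h (x i))) ∘ₗ
        LinearMap.funLeft ℚ ℚ fun h => h (x j)
    have weighted_mem : homSpan DD ≤ (homSpan DD).comap weighted := by
      refine Submodule.span_le.2 ?_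
      rintro _ ⟨G, rfl⟩
      change homSum DD F (fun h => (∏ i ∈ s, w i (h (x i))) * homVec DD G (h (x j))) ∈ homSpan DD
      rw [← homSum_glue F (x j) G fun h => ∏ i ∈ s, w i (h (x i))]
      exact ih (F.glue (x j) G) (fun i => .inl (x i)) hw.2
    simp only [Finset.prod_insert hj, mul_comm (w j _)]
    exact weighted_mem hw.1

theorem homSum_point (Φ : ((RootedFtree.point σ ar).carrier → D) → ℚ) :
    homSum DD (.point σ ar) Φ = fun d => Φ fun _ => d := by
  funext d
  suffices rootedHoms DD (.point σ ar) d = {fun _ => d} by rw [homSum_apply, this]; simp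
  ext h
  rw [mem_rootedHoms, Finset.mem_singleton, funext_iff]
  exact ⟨fun h _ => h.2, fun h => ⟨fun _ _ hu => hu.elim, h ()⟩⟩

theorem one_mem_homSpan : 1 ∈ homSpan DD :=
  Submodule.subset_span ⟨.point σ ar, homSum_point 1⟩

theorem mul_mem_homSpan {v w : D → ℚ} (hv : v ∈ homSpan DD) (hw : w ∈ homSpan DD) :
    v * w ∈ homSpan DD := by
  have h := homSum_prod_mem_homSpan (DD := DD) Finset.univ (.point σ ar)
    (fun _ : Bool => (RootedFtree.point σ ar).root) (w := fun b => cond b v w) (by simp [hv, hw])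
  rwa [homSum_point, show (fun d => ∏ b, cond b v w d) = v * w from funext fun d => by simp] at h

theorem degProfile_eq_iff {d d' : D} :
    degProfile DD d = degProfile DD d' ↔ ∀ f ∈ homSpan DD, f d = f d' := by
  refine ⟨fun h f hf => ?_, fun h => funext fun F => ?_⟩
  · refine LinearMap.eqOn_span (f := LinearMap.proj (R := ℚ) (φ := fun _ => ℚ) d)
      (g := LinearMap.proj d') ?_ hf
    rintro _ ⟨F, rfl⟩
    simp [homVec_apply, h]
  · simpa [homVec_apply] using h (homVec DD F) (Submodule.subset_span ⟨F, rfl⟩)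

theorem indicator_degProfile_mem_homSpan (g : RootedFtree σ ar → ℕ) :
    Set.indicator {d | degProfile DD d = g} 1 ∈ homSpan DD := by
  by_cases hg : ∃ d₀, degProfile DD d₀ = g
  · obtain ⟨d₀, rfl⟩ := hg
    simp only [degProfile_eq_iff]
    exact indicator_mem_subalgebra
      ((homSpan DD).toSubalgebra one_mem_homSpan fun _ _ => mul_mem_homSpan) d₀
  · rw [Set.eq_empty_of_forall_notMem (s := {d | _}) (not_exists.1 hg), Set.indicator_empty]
    exact (homSpan DD).zero_mem

end HomSum

section Counting

variable {α β L : Type*} {s : Finset α} {t : Finset β} {f : α → L} {g : β → L}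

theorem card_fiber_eq_of_forall_ne [DecidableEq L] [Finite L] (b : L) (hst : s.card = t.card)
    (h : ∀ c ≠ b, Finset.card {x ∈ s | f x = c} = Finset.card {y ∈ t | g y = c}) (c : L) :
    Finset.card {x ∈ s | f x = c} = Finset.card {y ∈ t | g y = c} := by
  have := Fintype.ofFinite L
  by_cases hc : c = b
  · subst hc
    rw [Finset.card_eq_sum_card_fiberwise (f := f) (t := Finset.univ) (by simp),
      Finset.card_eq_sum_card_fiberwise (f := g) (t := Finset.univ) (by simp),
      ← Finset.add_sum_erase _ _ (Finset.mem_univ c),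
      ← Finset.add_sum_erase _ _ (Finset.mem_univ c),
      Finset.sum_congr rfl fun c' hc' => h c' (Finset.ne_of_mem_erase hc')] at hst
    exact Nat.add_right_cancel hst
  · exact h c hc

theorem filter_eq_filter_le [PartialOrder L] (s : Finset α) (f : α → L) {E F : L} (hEF : E ≤ F) :
    {x ∈ {x ∈ s | E ≤ f x} | f x = F} = {x ∈ s | f x = F} := by
  rw [Finset.filter_filter]
  exact Finset.filter_congr fun x _ => and_iff_right_of_imp fun hx => hx ▸ hEF

theorem filter_le_filter_eq_empty [PartialOrder L] (s : Finset α) (f : α → L) {E F : L}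
    (hEF : ¬E ≤ F) : {x ∈ {x ∈ s | E ≤ f x} | f x = F} = (∅ : Finset α) := by
  refine Finset.filter_eq_empty_iff.2 ?_
  rintro x hx rfl
  exact hEF (Finset.mem_filter.1 hx).2

-- Inclusion-exclusion, in the form of a downward induction on `E`.
theorem card_fiber_eq_of_card_filter_le_eq [PartialOrder L] [Finite L]
    (h : ∀ E, Finset.card {x ∈ s | E ≤ f x} = Finset.card {y ∈ t | E ≤ g y}) (E : L) :
    Finset.card {x ∈ s | f x = E} = Finset.card {y ∈ t | g y = E} := by
  induction E using WellFoundedGT.induction with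
  | _ E ih =>
    rw [← filter_eq_filter_le s f le_rfl, ← filter_eq_filter_le t g le_rfl]
    refine card_fiber_eq_of_forall_ne E (h E) (fun F hF => ?_) E
    by_cases hEF : E ≤ F
    · rw [filter_eq_filter_le s f hEF, filter_eq_filter_le t g hEF]
      exact ih F (hEF.lt_of_ne' hF)
    · rw [filter_le_filter_eq_empty s f hEF, filter_le_filter_eq_empty t g hEF,
        Finset.card_empty, Finset.card_empty]

end Counting

section Tuples

variable {D : Type} {n : ℕ}

/-- The set of pairs of positions at which a tuple has equal entries. -/
def equalityPattern (u : Fin n → D) : Set (Fin n × Fin n) :=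
  {p | u p.1 = u p.2}

/-- The set of positions of a tuple holding the entry `a`. -/
def positions (u : Fin n → D) (a : D) : Finset (Fin n) :=
  {i | u i = a}

theorem positions_eq_iff {u : Fin n → D} {a : D} {S : Finset (Fin n)} {s : Fin n} (hs : s ∈ S) :
    positions u a = S ↔ u s = a ∧ ∀ i, (i, s) ∈ equalityPattern u ↔ i ∈ S := by
  constructor
  · rintro rfl
    obtain rfl : u s = a := by simpa [positions] using hs
    simp [positions, equalityPattern]
  · rintro ⟨rfl, h⟩
    ext i
    simp [← h, positions, equalityPattern]

theorem card_filter_positions_eq {u u' : Fin n → D} (hE : equalityPattern u = equalityPattern u')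
    {C : Finset D} (hC : ∀ s, u s ∈ C ↔ u' s ∈ C) (S : Finset (Fin n)) :
    Finset.card {a ∈ C | positions u a = S} = Finset.card {a ∈ C | positions u' a = S} := by
  refine card_fiber_eq_of_forall_ne ∅ rfl (fun S hS => ?_) S
  obtain ⟨s, hs⟩ := Finset.nonempty_iff_ne_empty.2 hS
  have card_eq (v : Fin n → D) : Finset.card {a ∈ C | positions v a = S} =
      if v s ∈ C ∧ ∀ i, (i, s) ∈ equalityPattern v ↔ i ∈ S then 1 else 0 := by
    simp only [positions_eq_iff hs]
    split_ifs with h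
    · refine Finset.card_eq_one.2 ⟨v s, Finset.ext fun a => ?_⟩
      rw [Finset.mem_filter, Finset.mem_singleton]
      exact ⟨fun ha => ha.2.1.symm, by rintro rfl; exact ⟨h.1, rfl, h.2⟩⟩
    · refine Finset.card_eq_zero.2 (Finset.filter_eq_empty_iff.2 ?_)
      rintro a ha ⟨rfl, hi⟩
      exact h ⟨ha, hi⟩
  simp only [card_eq, hC, hE]

variable [Fintype D] {DD : Struct σ ar D} {d d' : D}

/-- The tuples related by `R` whose entries have the profiles prescribed by `g`. -/
def profileTuples (DD : Struct σ ar D) (R : σ) (g : Fin (ar R) → RootedFtree σ ar → ℕ) :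
    Finset (Fin (ar R) → D) :=
  {u | u ∈ DD.rel R ∧ ∀ s, degProfile DD (u s) = g s}

theorem mem_profileTuples {R : σ} {g : Fin (ar R) → RootedFtree σ ar → ℕ} {u : Fin (ar R) → D} :
    u ∈ profileTuples DD R g ↔ u ∈ DD.rel R ∧ ∀ s, degProfile DD (u s) = g s := by
  simp [profileTuples]

variable (R : σ) (E : Set (Fin (ar R) × Fin (ar R))) (s : Fin (ar R))
  (g : Fin (ar R) → RootedFtree σ ar → ℕ)

theorem homSum_star_indicator (d : D) :
    homSum DD (.star R E s)
        (fun h => ∏ i, Set.indicator {d | degProfile DD d = g i} 1 (h (Quot.mk _ i))) d =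
      Finset.card {u ∈ {u ∈ profileTuples DD R g | u s = d} | E ≤ equalityPattern u} := by
  simp only [homSum_apply, Set.indicator_apply, Set.mem_ofPred_eq, Pi.one_apply,
    Finset.prod_boole, Finset.sum_boole, Finset.mem_univ, true_implies]
  congr 1
  refine Finset.card_nbij (· ∘ Quot.mk _) ?_ ?_ ?_
  · intro h hh
    obtain ⟨hh, hg⟩ := Finset.mem_filter.1 hh
    obtain ⟨hom, root⟩ := mem_rootedHoms.1 hh
    exact Finset.mem_filter.2 ⟨Finset.mem_filter.2 ⟨mem_profileTuples.2
      ⟨isHom_single_iff.1 hom, hg⟩, root⟩, fun p hp => congrArg h (Quot.sound hp)⟩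
  · exact Quot.mk_surjective.injective_comp_right.injOn
  · intro u hu
    obtain ⟨hu, hE⟩ := Finset.mem_filter.1 hu
    obtain ⟨hu, root⟩ := Finset.mem_filter.1 hu
    obtain ⟨hu, hg⟩ := mem_profileTuples.1 hu
    exact ⟨Quot.lift u fun i j hij => hE hij,
      Finset.mem_filter.2 ⟨mem_rootedHoms.2 ⟨isHom_single_iff.2 hu, root⟩, hg⟩, rfl⟩

theorem card_profileTuples_le_equalityPattern (h : degProfile DD d = degProfile DD d') :
    Finset.card {u ∈ {u ∈ profileTuples DD R g | u s = d} | E ≤ equalityPattern u} =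
      Finset.card {u ∈ {u ∈ profileTuples DD R g | u s = d'} | E ≤ equalityPattern u} := by
  have hmem := homSum_prod_mem_homSpan (DD := DD) Finset.univ (.star R E s) (Quot.mk _)
    fun i _ => indicator_degProfile_mem_homSpan (g i)
  have heq := degProfile_eq_iff.1 h _ hmem
  rw [homSum_star_indicator, homSum_star_indicator] at heq
  exact_mod_cast heq

theorem card_profileTuples_equalityPattern_eq (h : degProfile DD d = degProfile DD d') :
    Finset.card {u ∈ {u ∈ profileTuples DD R g | u s = d} | equalityPattern u = E} =
      Finset.card {u ∈ {u ∈ profileTuples DD R g | u s = d'} | equalityPattern u = E} :=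
  card_fiber_eq_of_card_filter_le_eq
    (fun E => card_profileTuples_le_equalityPattern R E s g h) E

theorem card_profileTuples_positions_eq (h : degProfile DD d = degProfile DD d')
    (S : Finset (Fin (ar R))) :
    Finset.card {u ∈ {u ∈ profileTuples DD R g | equalityPattern u = E} | positions u d = S} =
      Finset.card
        {u ∈ {u ∈ profileTuples DD R g | equalityPattern u = E} | positions u d' = S} := by
  refine card_fiber_eq_of_forall_ne ∅ rfl (fun S hS => ?_) S
  obtain ⟨s, hs⟩ := Finset.nonempty_iff_ne_empty.2 hS
  have card_eq (a : D) :
      Finset.card {u ∈ {u ∈ profileTuples DD R g | equalityPattern u = E} | positions u a = S} =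
        if ∀ i, (i, s) ∈ E ↔ i ∈ S then
          Finset.card {u ∈ {u ∈ profileTuples DD R g | u s = a} | equalityPattern u = E}
        else 0 := by
    split_ifs with hES
    · rw [Finset.filter_comm]
      congr 1
      ext u
      simp only [Finset.mem_filter, positions_eq_iff hs]
      grind
    · refine Finset.card_eq_zero.2 (Finset.filter_eq_empty_iff.2 fun u hu hpos => hES ?_)
      exact (Finset.mem_filter.1 hu).2 ▸ ((positions_eq_iff hs).1 hpos).2
  rw [card_eq, card_eq, card_profileTuples_equalityPattern_eq R E s g h]

end Tuples

section Constraints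

variable {D : Type} {DD : Struct σ ar D} {d d' : D} {R : σ} {u : Fin (ar R) → D}

theorem qProfile_mk_eq_iff {hu : u ∈ DD.rel R} {E : Set (Fin (ar R) × Fin (ar R))}
    {g : Fin (ar R) → RootedFtree σ ar → ℕ} :
    qProfile DD ⟨R, u, hu⟩ = ⟨R, E, g⟩ ↔
      equalityPattern u = E ∧ ∀ s, degProfile DD (u s) = g s := by
  simp [qProfile, equalityPattern, funext_iff]

theorem lab_mk_eq_iff {hu : u ∈ DD.rel R} {S : Finset (Fin (ar R))} :
    lab DD d ⟨R, u, hu⟩ = ⟨R, S⟩ ↔ positions u d = S := by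
  simp [lab, positions]

theorem card_cons_eq_card_profileTuples [Fintype D] (R : σ) (E : Set (Fin (ar R) × Fin (ar R)))
    (g : Fin (ar R) → RootedFtree σ ar → ℕ) (S : Finset (Fin (ar R))) :
    Nat.card {c : Cons DD // qProfile DD c = ⟨R, E, g⟩ ∧ lab DD d c = ⟨R, S⟩} =
      Finset.card
        {u ∈ {u ∈ profileTuples DD R g | equalityPattern u = E} | positions u d = S} := by
  rw [← Nat.card_eq_finsetCard]
  symm
  have mem_iff {u : Fin (ar R) → D} :
      u ∈ ({u ∈ {u ∈ profileTuples DD R g | equalityPattern u = E} | positions u d = S} :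
        Finset (Fin (ar R) → D)) ↔
      ∃ hu : u ∈ DD.rel R, qProfile DD ⟨R, u, hu⟩ = ⟨R, E, g⟩ ∧ lab DD d ⟨R, u, hu⟩ = ⟨R, S⟩ := by
    simp only [Finset.mem_filter, mem_profileTuples, qProfile_mk_eq_iff, lab_mk_eq_iff]
    grind
  refine Nat.card_eq_of_bijective
    (fun u => ⟨⟨R, u.1, (mem_iff.1 u.2).1⟩, (mem_iff.1 u.2).2⟩) ⟨fun u v huv => ?_, ?_⟩
  · have h := eq_of_heq (Sigma.mk.inj (congrArg Subtype.val huv)).2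
    exact Subtype.ext (Subtype.mk.inj h)
  · rintro ⟨⟨R', u, hu⟩, hq, hl⟩
    obtain rfl : R' = R := congrArg Sigma.fst hq
    exact ⟨⟨u, mem_iff.2 ⟨hu, hq, hl⟩⟩, rfl⟩

theorem card_qProfile_lab_eq [Finite D] (h : degProfile DD d = degProfile DD d')
    (ℓ : Label σ ar)
    (j : Σ R : σ, Set (Fin (ar R) × Fin (ar R)) × (Fin (ar R) → (RootedFtree σ ar → ℕ))) :
    Nat.card {c : Cons DD // qProfile DD c = j ∧ lab DD d c = ℓ} =
      Nat.card {c : Cons DD // qProfile DD c = j ∧ lab DD d' c = ℓ} := by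
  have := Fintype.ofFinite D
  by_cases hR : j.1 = ℓ.1
  · obtain ⟨R, E, g⟩ := j
    obtain ⟨_, S⟩ := ℓ
    obtain rfl : R = _ := hR
    rw [card_cons_eq_card_profileTuples, card_cons_eq_card_profileTuples,
      card_profileTuples_positions_eq R E g h]
  · have isEmpty (a : D) : IsEmpty {c : Cons DD // qProfile DD c = j ∧ lab DD a c = ℓ} :=
      ⟨fun ⟨_, hq, hl⟩ => hR (hq ▸ hl ▸ rfl)⟩
    rw [Nat.card_of_isEmpty, Nat.card_of_isEmpty]

theorem card_degProfile_lab_eq [Finite D] {c c' : Cons DD} (h : qProfile DD c = qProfile DD c')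
    (ℓ : Label σ ar) (i : RootedFtree σ ar → ℕ) :
    Nat.card {a // degProfile DD a = i ∧ lab DD a c = ℓ} =
      Nat.card {a // degProfile DD a = i ∧ lab DD a c' = ℓ} := by
  have := Fintype.ofFinite D
  obtain ⟨R, u, hu⟩ := c
  obtain ⟨R', u', hu'⟩ := c'
  obtain rfl : R = R' := congrArg Sigma.fst h
  by_cases hR : R = ℓ.1
  · obtain ⟨_, S⟩ := ℓ
    obtain rfl : R = _ := hR
    obtain ⟨hE, hg⟩ := qProfile_mk_eq_iff.1 h
    have card_eq := card_filter_positions_eq hE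
      (C := {a | degProfile DD a = i}) (fun s => by simp [hg s]) S
    simpa [lab_mk_eq_iff, Nat.card_eq_fintype_card, Fintype.card_subtype, Finset.filter_filter]
      using card_eq
  · have isEmpty (v : Fin (ar R) → D) (hv : v ∈ DD.rel R) :
        IsEmpty {a // degProfile DD a = i ∧ lab DD a ⟨R, v, hv⟩ = ℓ} :=
      ⟨fun ⟨_, _, hl⟩ => hR (hl ▸ rfl)⟩
    have := isEmpty u hu
    have := isEmpty u' hu'
    rw [Nat.card_of_isEmpty, Nat.card_of_isEmpty]

end Constraints

theorem exists_isEquitable {A : Type} {AA : Struct σ ar A} {I J : Type*} {p : A → I}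
    {q : Cons AA → J}
    (hp : ∀ {a a'}, p a = p a' → ∀ ℓ j, Nat.card {c // q c = j ∧ lab AA a c = ℓ} =
      Nat.card {c // q c = j ∧ lab AA a' c = ℓ})
    (hq : ∀ {c c'}, q c = q c' → ∀ ℓ i, Nat.card {a // p a = i ∧ lab AA a c = ℓ} =
      Nat.card {a // p a = i ∧ lab AA a c' = ℓ}) :
    ∃ cpar dpar, IsEquitable AA p q cpar dpar :=
  ⟨fun ℓ i j => Function.extend p (fun a => Nat.card {c // q c = j ∧ lab AA a c = ℓ}) 0 i,
    fun ℓ j i => Function.extend q (fun c => Nat.card {a // p a = i ∧ lab AA a c = ℓ}) 0 j,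
    fun a ℓ j => (Function.FactorsThrough.extend_apply (f := p) (fun _ _ h => hp h ℓ j) 0 a).symm,
    fun c ℓ i => (Function.FactorsThrough.extend_apply (f := q) (fun _ _ h => hq h ℓ i) 0 c).symm⟩

theorem stmt16_general {D : Type} [Finite D] (DD : Struct σ ar D) :
    ∃ cpar dpar, IsEquitable DD (degProfile DD) (qProfile DD) cpar dpar :=
  exists_isEquitable card_qProfile_lab_eq card_degProfile_lab_eq

theorem stmt16 [Fintype σ] {D : Type} [Fintype D] (DD : Struct σ ar D) :
    ∃ (cpar : Label σ ar → (RootedFtree σ ar → ℕ) →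
        (Σ R : σ, Set (Fin (ar R) × Fin (ar R)) × (Fin (ar R) → (RootedFtree σ ar → ℕ))) → ℕ)
      (dpar : Label σ ar →
        (Σ R : σ, Set (Fin (ar R) × Fin (ar R)) × (Fin (ar R) → (RootedFtree σ ar → ℕ))) →
        (RootedFtree σ ar → ℕ) → ℕ),
      IsEquitable DD (degProfile DD) (qProfile DD) cpar dpar :=
  stmt16_general DD

end
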